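/- Assume the integrality condition on (μ,ν). For every t with −1 < t < 1, one has ∫₀^∞ G^{μ,ν}(t,x) x^{μ+ν+1} dx = 2^{μ+ν} Γ((μ+ν+2)/2) (1+t)^{−(μ+ν+2)/2}, where G^{μ,ν}(t,x) = (1−t)^{−(μ+ν+2)/2} Ĩ_{μ/2}(tx/(1−t)) K̃_{ν/2}(x/(1−t)). -/

import Mathlib

open MeasureTheory Real Filter Set Metric

noncomputable section

/-- Normalized Bessel function of the first kind: `J̃_α(x) = (x/2)^{-α} J_α(x)`,
given by its (entire) power series. -/
def besselJt (α x : ℝ) : ℝ :=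
  ∑' m : ℕ, (-1) ^ m / (m.factorial * Real.Gamma (m + α + 1)) * (x / 2) ^ (2 * m)

/-- Bessel function of the first kind `J_α`. -/
def besselJ (α x : ℝ) : ℝ :=
  ∑' m : ℕ, (-1) ^ m / (m.factorial * Real.Gamma (m + α + 1)) * (x / 2) ^ (2 * (m : ℝ) + α)

/-- Normalized modified Bessel function `Ĩ_α(x) = (x/2)^{-α} I_α(x)`,
given by its (entire, even) power series. -/
def besselIt (α x : ℝ) : ℝ :=
  ∑' m : ℕ, (x / 2) ^ (2 * m) / (m.factorial * Real.Gamma (m + α + 1))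

/-- Modified Bessel function of the first kind `I_α`. -/
def besselI (α x : ℝ) : ℝ :=
  ∑' m : ℕ, (x / 2) ^ (2 * (m : ℝ) + α) / (m.factorial * Real.Gamma (m + α + 1))

/-- Modified Bessel function of the second kind,
`K_α(x) = lim_{β→α} (π/2)(I_{−β}(x) − I_β(x))/sin(βπ)`. -/
def besselK (α x : ℝ) : ℝ :=
  limUnder (nhdsWithin α {α}ᶜ) fun β =>
    Real.pi / 2 * (besselI (-β) x - besselI β x) / Real.sin (β * Real.pi)

/-- Normalized K-Bessel function `K̃_α(x) = (x/2)^{-α} K_α(x)`. -/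
def besselKt (α x : ℝ) : ℝ := (x / 2) ^ (-α) * besselK α x

/-- Normalized Gegenbauer polynomial `C̃_n^λ = Γ(λ) C_n^λ`, where `C_n^λ` is defined via the
generating function `(1 − 2xt + t²)^{−λ} = Σ_{n≥0} C_n^λ(x) tⁿ`; explicitly,
`C̃_n^λ(x) = Σ_{k=0}^{⌊n/2⌋} (−1)^k Γ(λ+n−k)/(k!(n−2k)!) (2x)^{n−2k}`.
This expression also gives the limit value `C̃_n^0 = lim_{λ→0+} Γ(λ) C_n^λ` for `n ≥ 1`. -/
def gegenbauerCt (n : ℕ) (l x : ℝ) : ℝ :=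
  ∑ k ∈ Finset.range (n / 2 + 1),
    (-1) ^ k * Real.Gamma (l + n - k) / (k.factorial * (n - 2 * k).factorial)
      * (2 * x) ^ (n - 2 * k)

/-- Laguerre polynomial `L_n^μ(x) = Σ_{k=0}^n (−1)^k binom(n+μ, n−k) x^k/k!`
(with nonnegative integer parameter `μ`). -/
def laguerreL (n μ : ℕ) (x : ℝ) : ℝ :=
  ∑ k ∈ Finset.range (n + 1),
    (-1) ^ k * (Nat.choose (n + μ) (n - k)) * x ^ k / k.factorial

/-- The Euler operator `θ = x d/dx`. -/
def eulerOp (u : ℝ → ℝ) : ℝ → ℝ := fun x => x * deriv u x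

/-- `(θ+c)(θ+c+ν)u − x² u`, i.e. the operator `Q_ν(θ+c)` applied to `u`. -/
def besselQ (ν c : ℝ) (u : ℝ → ℝ) : ℝ → ℝ := fun x =>
  eulerOp (fun y => eulerOp u y + (c + ν) * u y) x
    + c * (eulerOp u x + (c + ν) * u x) - x ^ 2 * u x

/-- The fourth order differential operator
`D_{μ,ν} = x^{−2}((θ+μ)(θ+μ+ν) − x²)(θ(θ+ν) − x²)`. -/
def Dop (μ ν : ℝ) (u : ℝ → ℝ) : ℝ → ℝ := fun x =>
  besselQ ν μ (besselQ ν 0 u) x / x ^ 2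

/-- The generating function
`G^{μ,ν}(t,x) = (1−t)^{−(μ+ν+2)/2} Ĩ_{μ/2}(tx/(1−t)) K̃_{ν/2}(x/(1−t))`. -/
def genFun (μ ν t x : ℝ) : ℝ :=
  (1 - t) ^ (-(μ + ν + 2) / 2) * besselIt (μ / 2) (t * x / (1 - t))
    * besselKt (ν / 2) (x / (1 - t))

/-- The eigenfunctions `Λ_j^{μ,ν}`, defined as the Taylor coefficients in `t` at `t = 0` of the
generating function `G^{μ,ν}(t,x) = Σ_{j≥0} Λ_j^{μ,ν}(x) t^j`. -/
def LambdaF (μ ν : ℝ) (j : ℕ) (x : ℝ) : ℝ :=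
  iteratedDeriv j (fun t => genFun μ ν t x) 0 / j.factorial

/-- The integrality condition: `μ ≥ ν ≥ −1` are integers of the same parity,
not both equal to `−1`. -/
def IntCond (μ ν : ℤ) : Prop :=
  -1 ≤ ν ∧ ν ≤ μ ∧ Even (μ - ν) ∧ ¬(μ = -1 ∧ ν = -1)

end

noncomputable section

def EE (a z : ℝ) : ℝ := ∑' m : ℕ, z ^ m / (m.factorial * Real.Gamma (m + a + 1))

def FF (s z : ℝ) : ℝ := ∫ u in Ioi (0:ℝ), Real.exp (-u - z / u) * u ^ (s - 1)

lemma EE_summable (a z : ℝ) :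
    Summable (fun m : ℕ => z ^ m / (m.factorial * Real.Gamma (m + a + 1))) := by
  have h := (Real.summable_pow_div_factorial |z|)
  refine Summable.of_norm_bounded_eventually_nat h ?_
  obtain ⟨N, hN⟩ := exists_nat_ge (1 - a)
  filter_upwards [eventually_ge_atTop N] with m hm
  have h1 : (N:ℝ) ≤ m := by exact_mod_cast hm
  have h2 : 1 ≤ Real.Gamma (m + a + 1) := by
    refine Real.Gamma_two.symm.le.trans ?_
    apply Real.Gamma_strictMonoOn_Ici.monotoneOn
    · simp
    · simp only [Set.mem_Ici]; linarith
    · linarith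
  have h3 : (0:ℝ) < m.factorial := by positivity
  rw [norm_div, norm_mul, norm_pow, Real.norm_eq_abs, Real.norm_eq_abs, Real.norm_eq_abs,
    abs_of_pos h3, abs_of_pos (by linarith : 0 < Real.Gamma (m + a + 1))]
  gcongr
  nlinarith

lemma EE_zero (a : ℝ) : EE a 0 = 1 / Real.Gamma (a + 1) := by
  unfold EE
  rw [tsum_eq_single 0]
  · simp
  · intro m hm
    simp [hm]

lemma EE_term_succ (a z : ℝ) (m : ℕ) :
    ((m + 1 : ℕ) : ℝ) * z ^ m / ((m + 1).factorial * Real.Gamma ((m + 1 : ℕ) + a + 1))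
      = z ^ m / (m.factorial * Real.Gamma (m + (a + 1) + 1)) := by
  have e : (((m + 1 : ℕ) : ℝ) + a + 1) = m + (a + 1) + 1 := by push_cast; ring
  rw [e, Nat.factorial_succ]
  push_cast
  have : (m:ℝ) + 1 ≠ 0 := by positivity
  rw [mul_assoc, mul_div_mul_left _ _ this]

lemma EE_hasDerivAt (a z : ℝ) : HasDerivAt (EE a) (EE (a + 1) z) z := by
  set R : ℝ := |z| + 1 with hR
  have hR0 : 0 < R := by positivity
  set g' : ℕ → ℝ → ℝ := fun m y => (m : ℝ) * y ^ (m - 1) / (m.factorial * Real.Gamma (m + a + 1))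
  have key : ∀ y, Summable (fun m => g' m y) := by
    intro y
    rw [← summable_nat_add_iff 1]
    refine (EE_summable (a + 1) y).congr ?_
    intro m
    exact (EE_term_succ a y m).symm
  have hval : ∑' m, g' m z = EE (a + 1) z := by
    rw [(key z).tsum_eq_zero_add]
    simp only [g', Nat.cast_zero, zero_mul, zero_div, zero_add]
    exact tsum_congr fun m => EE_term_succ a z m
  rw [← hval]
  have hz : z ∈ Metric.ball (0:ℝ) R := by simp [hR]
  refine hasDerivAt_tsum_of_isPreconnected (u := fun m => ‖g' m R‖) (t := Metric.ball 0 R)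
    (key R).norm Metric.isOpen_ball (convex_ball _ _).isPreconnected ?_ ?_ hz (EE_summable a z) hz
  · intro m y hy
    exact (hasDerivAt_pow m y).div_const _
  · intro m y hy
    have : |y| ≤ R := by simpa using (mem_ball_zero_iff.1 hy).le
    simp only [g', norm_div, norm_mul, norm_pow, Real.norm_eq_abs, abs_of_pos hR0]
    gcongr

lemma EE_rec (a z : ℝ) (ha : ∀ n : ℕ, a ≠ -n) : a * EE a z + z * EE (a + 1) z = EE (a - 1) z := by
  have h1 : z * EE (a + 1) z
      = ∑' m : ℕ, (m : ℝ) * (z ^ m / (m.factorial * Real.Gamma (m + a + 1))) := by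
    have hs : Summable (fun m : ℕ => (m : ℝ) * (z ^ m / (m.factorial * Real.Gamma (m + a + 1)))) := by
      rw [← summable_nat_add_iff 1]
      refine ((EE_summable (a + 1) z).mul_left z).congr ?_
      intro m
      rw [← EE_term_succ a z m]; ring
    rw [hs.tsum_eq_zero_add]
    simp only [Nat.cast_zero, zero_mul, zero_add]
    unfold EE
    rw [← tsum_mul_left]
    refine tsum_congr fun m => ?_
    rw [← EE_term_succ a z m]; ring
  have hs : Summable (fun m : ℕ => (m : ℝ) * (z ^ m / (m.factorial * Real.Gamma (m + a + 1)))) := by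
    rw [← summable_nat_add_iff 1]
    refine ((EE_summable (a + 1) z).mul_left z).congr ?_
    intro m
    rw [← EE_term_succ a z m]; ring
  rw [h1]
  unfold EE
  rw [← tsum_mul_left, ← ((EE_summable a z).mul_left a).tsum_add hs]
  refine tsum_congr fun m => ?_
  have hne : (m:ℝ) + a ≠ 0 := fun h => ha m (by linarith)
  rw [Real.Gamma_add_one hne, show (m:ℝ) + (a - 1) + 1 = m + a by ring, ← add_mul, add_comm a,
    ← mul_div_assoc, mul_left_comm, mul_div_mul_left _ _ hne]

lemma EE_hasDerivAt_rpow (a z : ℝ) (hz : 0 < z) (ha : ∀ n : ℕ, a ≠ -n) :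
    HasDerivAt (fun z => z ^ a * EE a z) (z ^ (a - 1) * EE (a - 1) z) z := by
  have h := (Real.hasDerivAt_rpow_const (p := a) (Or.inl hz.ne')).mul (EE_hasDerivAt a z)
  refine h.congr_deriv ?_
  rw [← EE_rec a z ha]
  have : z ^ a = z ^ (a - 1) * z := by
    rw [← Real.rpow_add_one hz.ne']; ring_nf
  rw [this]; ring

/-- integrability -/
lemma FF_integrable (s z : ℝ) (hz : 0 < z) :
    IntegrableOn (fun u => Real.exp (-u - z / u) * u ^ (s - 1)) (Ioi 0) := by
  obtain ⟨k, hk⟩ := exists_nat_gt (-s)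
  have h := (Real.GammaIntegral_convergent (s := s + k) (by linarith)).const_mul
    (k.factorial / z ^ k : ℝ)
  refine Integrable.mono' h ?_ ?_
  · refine Measurable.aestronglyMeasurable ?_
    fun_prop
  · refine (ae_restrict_iff' measurableSet_Ioi).2 (ae_of_all _ fun u hu => ?_)
    have hu : 0 < u := hu
    rw [Real.norm_of_nonneg (by positivity)]
    have h1 := Real.pow_div_factorial_le_exp (z / u) (by positivity) k
    have h2 : Real.exp (-(z/u)) ≤ k.factorial * u ^ k / z ^ k := by
      rw [Real.exp_neg]
      refine (inv_anti₀ (by positivity) h1).trans (le_of_eq ?_)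
      rw [div_pow]
      field_simp
    rw [sub_eq_add_neg, Real.exp_add]
    calc Real.exp (-u) * Real.exp (-(z/u)) * u ^ (s-1)
        ≤ Real.exp (-u) * (k.factorial * u ^ k / z ^ k) * u ^ (s-1) := by gcongr
      _ = _ := by
        rw [show s + k - 1 = (s - 1) + k by ring, Real.rpow_add hu, Real.rpow_natCast]
        ring

lemma FF_zero (s : ℝ) (hs : 0 < s) : FF s 0 = Real.Gamma s := by
  rw [Real.Gamma_eq_integral hs]
  simp [FF]

lemma FF_cont_zero (s : ℝ) (hs : 0 < s) : ContinuousWithinAt (FF s) (Ioi 0) 0 := by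
  refine continuousWithinAt_of_dominated (bound := fun u => Real.exp (-u) * u ^ (s - 1)) ?_ ?_
    (Real.GammaIntegral_convergent hs) ?_
  · refine Eventually.of_forall fun z => Measurable.aestronglyMeasurable ?_
    fun_prop
  · filter_upwards [self_mem_nhdsWithin] with z hz
    refine (ae_restrict_iff' measurableSet_Ioi).2 (ae_of_all _ fun u hu => ?_)
    have hu : 0 < u := hu
    have hz : 0 < z := hz
    rw [Real.norm_of_nonneg (by positivity)]
    gcongr
    have : 0 < z / u := by positivity
    linarith
  · refine ae_of_all _ fun u => ?_
    fun_prop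

lemma FF_hasDerivAt (s z : ℝ) (hz : 0 < z) : HasDerivAt (FF s) (-FF (s - 1) z) z := by
  have key := hasDerivAt_integral_of_dominated_loc_of_deriv_le (μ := volume.restrict (Ioi (0:ℝ)))
    (F := fun z u => Real.exp (-u - z / u) * u ^ (s - 1))
    (F' := fun z u => -(Real.exp (-u - z / u) * u ^ (s - 1 - 1))) (x₀ := z)
    (s := Ioi (z / 2)) (bound := fun u => Real.exp (-u - (z / 2) / u) * u ^ (s - 1 - 1))
    (Ioi_mem_nhds (by linarith)) ?_ (FF_integrable s z hz) ?_ ?_ (FF_integrable (s-1) (z/2) (by linarith)) ?_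
  · have := key.2
    rw [integral_neg] at this
    exact this
  · refine Eventually.of_forall fun z => Measurable.aestronglyMeasurable ?_
    fun_prop
  · refine Measurable.aestronglyMeasurable ?_
    fun_prop
  · refine (ae_restrict_iff' measurableSet_Ioi).2 (ae_of_all _ fun u hu y hy => ?_)
    have hu : 0 < u := hu
    have hy : z / 2 < y := hy
    rw [norm_neg, Real.norm_of_nonneg (by positivity)]
    gcongr
  · refine (ae_restrict_iff' measurableSet_Ioi).2 (ae_of_all _ fun u hu y hy => ?_)
    have hu : 0 < u := hu
    have h1 : HasDerivAt (fun y : ℝ => -u - y / u) (-(1 / u)) y := by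
      simpa using ((hasDerivAt_id y).div_const u).const_sub (-u)
    have h2 := (h1.exp).mul_const (u ^ (s - 1))
    refine h2.congr_deriv ?_
    rw [Real.rpow_sub_one hu.ne' (s-1)]
    field_simp

lemma FF_symm (s z : ℝ) (hz : 0 < z) : FF s z = z ^ s * FF (-s) z := by
  have h1 := integral_comp_rpow_Ioi (fun u => Real.exp (-u - z / u) * u ^ (s - 1))
    (p := -1) (by norm_num)
  have h2 := integral_comp_mul_left_Ioi
    (fun v => Real.exp (-(v⁻¹) - z * v) * v ^ (-s - 1)) 0 (b := z⁻¹) (by positivity)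
  unfold FF
  rw [← h1]
  have e1 : ∫ x in Ioi (0:ℝ), (|(-1:ℝ)| * x ^ ((-1:ℝ) - 1)) •
      (Real.exp (-x ^ (-1:ℝ) - z / x ^ (-1:ℝ)) * (x ^ (-1:ℝ)) ^ (s - 1))
      = ∫ v in Ioi (0:ℝ), Real.exp (-(v⁻¹) - z * v) * v ^ (-s - 1) := by
    refine setIntegral_congr_fun measurableSet_Ioi fun x hx => ?_
    have hx : 0 < x := hx
    simp only [smul_eq_mul, abs_neg, abs_one, one_mul]
    rw [← Real.rpow_mul hx.le, Real.rpow_neg_one, div_inv_eq_mul, mul_left_comm, ← Real.rpow_add hx]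
    ring_nf
  rw [e1]
  have e2 : ∫ x in Ioi (0:ℝ), Real.exp (-((z⁻¹ * x)⁻¹) - z * (z⁻¹ * x)) * (z⁻¹ * x) ^ (-s - 1)
      = z ^ (s + 1) * ∫ u in Ioi (0:ℝ), Real.exp (-u - z / u) * u ^ (-s - 1) := by
    rw [← integral_const_mul]
    refine setIntegral_congr_fun measurableSet_Ioi fun x hx => ?_
    have hx : 0 < x := hx
    rw [Real.mul_rpow (by positivity) hx.le, Real.inv_rpow hz.le, ← Real.rpow_neg hz.le,
      mul_inv_cancel_left₀ hz.ne', mul_inv, inv_inv, mul_left_comm]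
    ring_nf
  rw [e2] at h2
  simp only [mul_zero, inv_inv, smul_eq_mul] at h2
  rw [Real.rpow_add_one hz.ne'] at h2
  have := hz.ne'
  apply mul_left_cancel₀ this
  rw [← h2]; ring

end
noncomputable section

lemma FF_cont_s (s z : ℝ) (hz : 0 < z) : ContinuousAt (fun s => FF s z) s := by
  have hb := (FF_integrable (s - 1) z hz).add (FF_integrable (s + 1) z hz)
  refine continuousAt_of_dominated (F := fun (s : ℝ) (u : ℝ) => Real.exp (-u - z / u) * u ^ (s - 1)) ?_ ?_
    hb ?_
  · refine Eventually.of_forall fun z => Measurable.aestronglyMeasurable ?_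
    fun_prop
  · filter_upwards [Ioo_mem_nhds (show s - 1 < s by linarith) (show s < s + 1 by linarith)] with r hr
    refine (ae_restrict_iff' measurableSet_Ioi).2 (ae_of_all _ fun u hu => ?_)
    have hu : 0 < u := hu
    rw [Real.norm_of_nonneg (by positivity)]
    simp only [Pi.add_apply]
    rw [← mul_add]
    gcongr
    rcases le_total u 1 with h | h
    · have := Real.rpow_le_rpow_of_exponent_ge hu h (show s - 1 - 1 ≤ r - 1 by linarith [hr.1])
      have h' : 0 ≤ u ^ (s + 1 - 1) := by positivity
      linarith
    · have := Real.rpow_le_rpow_of_exponent_le h (show r - 1 ≤ s + 1 - 1 by linarith [hr.2])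
      have h' : 0 ≤ u ^ (s - 1 - 1) := by positivity
      linarith
  · refine (ae_restrict_iff' measurableSet_Ioi).2 (ae_of_all _ fun u hu => ?_)
    have hu : 0 < u := hu
    refine ContinuousAt.mul continuousAt_const ?_
    exact ContinuousAt.rpow continuousAt_const (by fun_prop) (Or.inl hu.ne')

lemma const_of_deriv_zero {f : ℝ → ℝ} {c : ℝ} (hd : ∀ z, 0 < z → HasDerivAt f 0 z)
    (hc : Tendsto f (nhdsWithin 0 (Ioi 0)) (nhds c)) {z : ℝ} (hz : 0 < z) : f z = c := by
  have h : ∀ y ∈ Ioi (0:ℝ), f y = f z := by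
    intro y hy
    exact isOpen_Ioi.is_const_of_deriv_eq_zero isPreconnected_Ioi
      (fun x hx => (hd x hx).differentiableAt.differentiableWithinAt)
      (fun x hx => (hd x hx).deriv) hy hz
  have h2 : Tendsto f (nhdsWithin 0 (Ioi 0)) (nhds (f z)) := by
    refine tendsto_const_nhds.congr' ?_
    filter_upwards [self_mem_nhdsWithin] with y hy
    exact (h y hy).symm
  exact tendsto_nhds_unique h2 hc

lemma ne_neg_nat_of_Ioo {a : ℝ} (h1 : -1 < a) (h2 : a ≠ 0) : ∀ n : ℕ, a ≠ -n := by
  intro n h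
  rcases Nat.eq_zero_or_pos n with rfl | hn
  · simp at h; exact h2 h
  · have : (1:ℝ) ≤ n := by exact_mod_cast hn
    linarith

lemma EE_tendsto (a : ℝ) : Tendsto (EE a) (nhdsWithin 0 (Ioi 0)) (nhds (1 / Real.Gamma (a + 1))) := by
  rw [← EE_zero]
  exact (EE_hasDerivAt a 0).continuousAt.tendsto.mono_left nhdsWithin_le_nhds

lemma FF_tendsto (s : ℝ) (hs : 0 < s) :
    Tendsto (FF s) (nhdsWithin 0 (Ioi 0)) (nhds (Real.Gamma s)) := by
  rw [← FF_zero s hs]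
  exact FF_cont_zero s hs

lemma rpow_tendsto (s : ℝ) (hs : 0 < s) :
    Tendsto (fun z : ℝ => z ^ s) (nhdsWithin 0 (Ioi 0)) (nhds 0) := by
  have := (Real.continuousAt_rpow_const 0 s (Or.inr hs.le)).tendsto
  rw [Real.zero_rpow hs.ne'] at this
  exact this.mono_left nhdsWithin_le_nhds

lemma FF_deriv' (s z : ℝ) (hz : 0 < z) : HasDerivAt (FF s) (-(z ^ (s - 1) * FF (1 - s) z)) z := by
  have h := FF_hasDerivAt s z hz
  rw [FF_symm (s - 1) z hz, show -(s - 1) = 1 - s by ring] at h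
  exact h

lemma wronsk1 (s z : ℝ) (hs : 0 < s) (hs1 : s < 1) (hz : 0 < z) :
    FF s z * (z ^ (1 - s) * EE (1 - s) z) + FF (1 - s) z * EE (-s) z = 1 := by
  have hG : Real.Gamma (1 - s) ≠ 0 := (Real.Gamma_pos_of_pos (by linarith)).ne'
  refine const_of_deriv_zero (f := fun z => FF s z * (z ^ (1 - s) * EE (1 - s) z) + FF (1 - s) z * EE (-s) z)
    ?_ ?_ hz
  · intro z hz
    have h1 := FF_deriv' s z hz
    have h2 := FF_deriv' (1 - s) z hz
    have h3 := EE_hasDerivAt_rpow (1 - s) z hz (ne_neg_nat_of_Ioo (by linarith) (by linarith))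
    have h4 := EE_hasDerivAt (-s) z
    refine ((h1.mul h3).add (h2.mul h4)).congr_deriv ?_
    rw [show 1 - (1 - s) = s by ring, show 1 - s - 1 = -s by ring, show -s + 1 = 1 - s by ring]
    have e : z ^ (s - 1) * z ^ (1 - s) = 1 := by
      rw [← Real.rpow_add hz]; simp
    linear_combination (-FF (1 - s) z * EE (1 - s) z) * e
  · have h := ((FF_tendsto s hs).mul ((rpow_tendsto (1 - s) (by linarith)).mul (EE_tendsto (1 - s)))).add
      ((FF_tendsto (1 - s) (by linarith)).mul (EE_tendsto (-s)))
    rw [show -s + 1 = 1 - s by ring] at h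
    have e : Real.Gamma s * (0 * (1 / Real.Gamma (1 - s + 1))) + Real.Gamma (1 - s) * (1 / Real.Gamma (1 - s)) = 1 := by
      field_simp; ring
    rw [e] at h
    exact h

lemma wronsk2 (s z : ℝ) (hs : 0 < s) (hs1 : s < 1) (hz : 0 < z) :
    EE (-s) z * EE (s - 1) z - (z ^ s * EE s z) * (z ^ (1 - s) * EE (1 - s) z)
      = Real.sin (Real.pi * s) / Real.pi := by
  refine const_of_deriv_zero (f := fun z => EE (-s) z * EE (s - 1) z - (z ^ s * EE s z) * (z ^ (1 - s) * EE (1 - s) z))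
    ?_ ?_ hz
  · intro z hz
    have h1 := EE_hasDerivAt (s - 1) z
    have h2 := EE_hasDerivAt_rpow s z hz (ne_neg_nat_of_Ioo (by linarith) (by linarith))
    have h3 := EE_hasDerivAt_rpow (1 - s) z hz (ne_neg_nat_of_Ioo (by linarith) (by linarith))
    have h4 := EE_hasDerivAt (-s) z
    refine ((h4.mul h1).sub (h2.mul h3)).congr_deriv ?_
    rw [show s - 1 + 1 = s by ring, show 1 - s - 1 = -s by ring, show -s + 1 = 1 - s by ring]
    have e : z ^ (s - 1) * z ^ (1 - s) = 1 := by
      rw [← Real.rpow_add hz]; simp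
    have e' : z ^ s * z ^ (-s) = 1 := by
      rw [← Real.rpow_add hz]; simp
    linear_combination (-EE (s - 1) z * EE (1 - s) z) * e - EE s z * EE (-s) z * e'
  · have h := ((EE_tendsto (-s)).mul (EE_tendsto (s - 1))).sub (((rpow_tendsto s hs).mul (EE_tendsto s)).mul
      ((rpow_tendsto (1 - s) (by linarith)).mul (EE_tendsto (1 - s))))
    rw [show -s + 1 = 1 - s by ring, show s - 1 + 1 = s by ring] at h
    have e : 1 / Real.Gamma (1 - s) * (1 / Real.Gamma s) - 0 * (1 / Real.Gamma (s + 1)) * (0 * (1 / Real.Gamma (1 - s + 1)))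
        = Real.sin (Real.pi * s) / Real.pi := by
      have := Real.Gamma_mul_Gamma_one_sub s
      rw [← inv_div Real.pi, ← this]
      simp [mul_comm]
    rw [e] at h
    exact h

lemma FF_base (s z : ℝ) (hs : 0 < s) (hs1 : s < 1) (hz : 0 < z) :
    FF s z * (Real.sin (Real.pi * s) / Real.pi) = EE (-s) z - z ^ s * EE s z := by
  have h1 := wronsk1 s z hs hs1 hz
  have h2 := wronsk1 (1 - s) z (by linarith) (by linarith) hz
  rw [show 1 - (1 - s) = s by ring, show -(1 - s) = s - 1 by ring] at h2
  rw [← wronsk2 s z hs hs1 hz]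
  linear_combination EE (-s) z * h2 - (z ^ s * EE s z) * h1

lemma FF_formula (n : ℕ) : ∀ (b : ℝ), (n:ℝ) - 1 < b → b < n → ∀ z, 0 < z →
    FF (-b) z * (Real.sin (Real.pi * b) / Real.pi) = z ^ (-b) * EE (-b) z - EE b z := by
  induction n with
  | zero =>
    intro b h1 h2 z hz
    simp at h1 h2
    have h := FF_base (-b) z (by linarith) (by linarith) hz
    rw [neg_neg, mul_neg, Real.sin_neg] at h
    linear_combination -h
  | succ n ih =>
    intro b h1 h2 z hz
    push_cast at h1 h2
    have hd1 := (FF_hasDerivAt (-(b - 1)) z hz).mul_const (Real.sin (Real.pi * (b - 1)) / Real.pi)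
    have hb : ∀ k : ℕ, -(b - 1) ≠ -k := by
      intro k hk
      have e1 : (n:ℝ) < k + 1 := by linarith
      have e2 : (k:ℝ) < n := by linarith
      have e1' : n < k + 1 := by exact_mod_cast e1
      have e2' : k < n := by exact_mod_cast e2
      omega
    have hd2 := (EE_hasDerivAt_rpow (-(b - 1)) z hz hb).sub (EE_hasDerivAt (b - 1) z)
    have hd3 := hd2.congr_of_eventuallyEq (f₁ := fun z => FF (-(b-1)) z * (Real.sin (Real.pi * (b-1)) / Real.pi)) (by
      filter_upwards [Ioi_mem_nhds hz] with y hy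
      exact ih (b - 1) (by linarith) (by linarith) y hy)
    have h := hd1.unique hd3
    rw [show -(b - 1) - 1 = -b by ring, show b - 1 + 1 = b by ring,
      show Real.pi * (b - 1) = Real.pi * b - Real.pi by ring, Real.sin_sub_pi] at h
    linear_combination h

lemma besselI_eq (b x : ℝ) (hx : 0 < x) : besselI b x = (x / 2) ^ b * EE b (x ^ 2 / 4) := by
  unfold besselI EE
  rw [← tsum_mul_left]
  refine tsum_congr fun m => ?_
  have h2 : 0 < x / 2 := by positivity
  rw [Real.rpow_add h2, show (2 * (m:ℝ)) = ((2 * m : ℕ) : ℝ) by push_cast; ring, Real.rpow_natCast,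
    pow_mul, show (x / 2) ^ 2 = x ^ 2 / 4 by ring]
  ring

lemma besselK_fun_eq (b x : ℝ) (hx : 0 < x) (hb : -1 < b) (hb' : ∀ k : ℤ, b ≠ k) :
    Real.pi / 2 * (besselI (-b) x - besselI b x) / Real.sin (b * Real.pi)
      = (x / 2) ^ b * (1 / 2 * FF (-b) (x ^ 2 / 4)) := by
  have hz : 0 < x ^ 2 / 4 := by positivity
  have h2 : 0 < x / 2 := by positivity
  have hfl : (0:ℤ) ≤ ⌊b⌋ + 1 := by
    have : (-1 : ℤ) ≤ ⌊b⌋ := by rw [Int.le_floor]; push_cast; linarith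
    linarith
  obtain ⟨n, hn⟩ := Int.eq_ofNat_of_zero_le hfl
  have hn' : (n:ℝ) = ⌊b⌋ + 1 := by exact_mod_cast hn.symm
  have hl : (⌊b⌋:ℝ) < b := lt_of_le_of_ne (Int.floor_le b) (fun h => hb' _ h.symm)
  have h := FF_formula n b (by linarith) (by linarith [Int.lt_floor_add_one b]) _ hz
  have hs : Real.sin (b * Real.pi) ≠ 0 := by
    intro h0
    rw [Real.sin_eq_zero_iff] at h0
    obtain ⟨k, hk⟩ := h0
    exact hb' k (mul_right_cancel₀ Real.pi_ne_zero hk).symm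
  rw [besselI_eq _ _ hx, besselI_eq _ _ hx]
  have hp : (x ^ 2 / 4) ^ (-b) = (x / 2) ^ (-b) * (x / 2) ^ (-b) := by
    rw [← Real.mul_rpow h2.le h2.le]; ring_nf
  have hp1 : (x / 2) ^ b * (x / 2) ^ (-b) = 1 := by
    rw [← Real.rpow_add h2]; simp
  rw [hp, mul_comm Real.pi b] at h
  rw [div_eq_iff hs]
  have hpi := Real.pi_ne_zero
  have h' : FF (-b) (x ^ 2 / 4) * Real.sin (b * Real.pi)
     = Real.pi * ((x / 2) ^ (-b) * (x / 2) ^ (-b) * EE (-b) (x ^ 2 / 4) - EE b (x ^ 2 / 4)) := by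
    rw [← h]; field_simp
  linear_combination (-(x/2)^b * (1/2)) * h' - (Real.pi / 2 * (x / 2) ^ (-b) * EE (-b) (x ^ 2 / 4)) * hp1

lemma besselKt_eq (ν : ℤ) (hν : -1 ≤ ν) (x : ℝ) (hx : 0 < x) :
    besselKt ((ν:ℝ) / 2) x = 1 / 2 * FF (-((ν:ℝ) / 2)) (x ^ 2 / 4) := by
  have hz : 0 < x ^ 2 / 4 := by positivity
  have h2 : 0 < x / 2 := by positivity
  have hν' : (-1:ℝ) ≤ ν := by exact_mod_cast hν
  have hK : besselK ((ν:ℝ)/2) x = (x / 2) ^ ((ν:ℝ)/2) * (1 / 2 * FF (-((ν:ℝ) / 2)) (x ^ 2 / 4)) := by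
    unfold besselK
    apply Filter.Tendsto.limUnder_eq
    have hc : ContinuousAt (fun b : ℝ => (x / 2) ^ b * (1 / 2 * FF (-b) (x ^ 2 / 4))) ((ν:ℝ)/2) := by
      refine ContinuousAt.mul ?_ (ContinuousAt.mul continuousAt_const ?_)
      · exact ContinuousAt.rpow continuousAt_const (by fun_prop) (Or.inl h2.ne')
      · exact ContinuousAt.comp (g := fun s => FF s (x ^ 2 / 4)) (FF_cont_s _ _ hz) (by fun_prop)
    refine (hc.tendsto.mono_left nhdsWithin_le_nhds).congr' ?_
    filter_upwards [self_mem_nhdsWithin, mem_nhdsWithin_of_mem_nhds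
      (Ioo_mem_nhds (show (ν:ℝ)/2 - 1/2 < (ν:ℝ)/2 by linarith) (show (ν:ℝ)/2 < (ν:ℝ)/2 + 1/2 by linarith))] with b hb1 hb2
    refine (besselK_fun_eq b x hx (by linarith [hb2.1]) ?_).symm
    rintro k rfl
    have e1 : (ν:ℝ) - 1 < 2 * k := by linarith [hb2.1]
    have e2 : 2 * (k:ℝ) < ν + 1 := by linarith [hb2.2]
    have e1' : ν - 1 < 2 * k := by exact_mod_cast e1
    have e2' : 2 * k < ν + 1 := by exact_mod_cast e2
    apply hb1
    have : ν = 2 * k := by omega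
    rw [this]; simp
  unfold besselKt
  rw [hK, ← mul_assoc, ← Real.rpow_add h2]
  simp

end
noncomputable section

lemma mellinK_inner (b c u : ℝ) (hc : 0 < c) (hu : 0 < u) :
    IntegrableOn (fun y : ℝ => y ^ (2 * c - 1) * (1 / 2 * (Real.exp (-u - y ^ 2 / 4 / u) * u ^ (-b - 1)))) (Ioi 0)
    ∧ ∫ y in Ioi (0:ℝ), y ^ (2 * c - 1) * (1 / 2 * (Real.exp (-u - y ^ 2 / 4 / u) * u ^ (-b - 1)))
      = (4 ^ (c - 1) * Real.Gamma c) * (Real.exp (-u) * u ^ (c - b - 1)) := by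
  have hbu : 0 < 1 / (4 * u) := by positivity
  have h1 := integrableOn_rpow_mul_exp_neg_mul_rpow (p := 2) (s := 2 * c - 1) (b := 1 / (4 * u))
    (by linarith) (by norm_num) hbu
  have h2 := integral_rpow_mul_exp_neg_mul_rpow (p := 2) (q := 2 * c - 1) (b := 1 / (4 * u))
    (by norm_num) (by linarith) hbu
  have e : (fun y : ℝ => y ^ (2 * c - 1) * (1 / 2 * (Real.exp (-u - y ^ 2 / 4 / u) * u ^ (-b - 1))))
      = fun y : ℝ => (1 / 2 * Real.exp (-u) * u ^ (-b - 1)) *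
        (y ^ (2 * c - 1) * Real.exp (-(1 / (4 * u)) * y ^ (2:ℝ))) := by
    funext y
    rw [sub_eq_add_neg (-u), Real.exp_add, Real.rpow_two,
      show -(1 / (4 * u)) * y ^ 2 = -(y ^ 2 / 4 / u) by field_simp]
    ring
  rw [e]
  refine ⟨h1.const_mul _, ?_⟩
  rw [integral_const_mul, h2, show -(2 * c - 1 + 1) / 2 = -c by ring,
    show (2 * c - 1 + 1) / 2 = c by ring, one_div (4 * u), Real.inv_rpow (by positivity),
    Real.rpow_neg (by positivity), inv_inv, Real.mul_rpow (by norm_num) hu.le,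
    show c - b - 1 = c + (-b - 1) by ring, Real.rpow_add hu, Real.rpow_sub_one (by norm_num) c]
  ring

lemma mellinK (b c : ℝ) (hc : 0 < c) (hcb : 0 < c - b) :
    IntegrableOn (fun y : ℝ => y ^ (2 * c - 1) * (1 / 2 * FF (-b) (y ^ 2 / 4))) (Ioi 0)
    ∧ ∫ y in Ioi (0:ℝ), y ^ (2 * c - 1) * (1 / 2 * FF (-b) (y ^ 2 / 4))
      = 4 ^ (c - 1) * Real.Gamma c * Real.Gamma (c - b) := by
  set f : ℝ → ℝ → ℝ := fun y u =>
    y ^ (2 * c - 1) * (1 / 2 * (Real.exp (-u - y ^ 2 / 4 / u) * u ^ (-b - 1))) with hf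
  have hfint : Integrable (Function.uncurry f)
      ((volume.restrict (Ioi (0:ℝ))).prod (volume.restrict (Ioi (0:ℝ)))) := by
    rw [integrable_prod_iff']
    · constructor
      · refine (ae_restrict_iff' measurableSet_Ioi).2 (ae_of_all _ fun u hu => ?_)
        exact (mellinK_inner b c u hc hu).1
      · have hG := (Real.GammaIntegral_convergent hcb).const_mul (4 ^ (c - 1) * Real.Gamma c)
        refine Integrable.congr hG ?_
        refine (ae_restrict_iff' measurableSet_Ioi).2 (ae_of_all _ fun u hu => ?_)
        beta_reduce
        rw [← (mellinK_inner b c u hc hu).2]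
        refine setIntegral_congr_fun measurableSet_Ioi fun y hy => ?_
        have hy : 0 < y := hy
        have hu : 0 < u := hu
        simp only [Function.uncurry, hf]
        rw [Real.norm_of_nonneg (by positivity)]
    · refine Measurable.aestronglyMeasurable ?_
      simp only [hf, Function.uncurry_def]
      fun_prop
  have e : ∀ y, ∫ u in Ioi (0:ℝ), f y u = y ^ (2 * c - 1) * (1 / 2 * FF (-b) (y ^ 2 / 4)) := by
    intro y
    simp only [hf, FF, integral_const_mul]
  constructor
  · have := hfint.integral_prod_left
    simp only [Function.uncurry, e] at this
    exact this
  · have := integral_integral_swap hfint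
    simp only [e] at this
    rw [this, Real.Gamma_eq_integral hcb, ← integral_const_mul]
    refine setIntegral_congr_fun measurableSet_Ioi fun u hu => ?_
    exact (mellinK_inner b c u hc hu).2

lemma sum_gamma (n : ℕ) (r : ℝ) (hr : |r| < 1) :
    HasSum (fun m : ℕ => r ^ m * Real.Gamma ((m:ℝ) + n + 1) / m.factorial)
      (Real.Gamma ((n:ℝ) + 1) / (1 - r) ^ (n + 1)) := by
  have h := (hasSum_choose_mul_geometric_of_norm_lt_one n (r := r) hr).mul_left (n.factorial : ℝ)
  rw [Real.Gamma_nat_eq_factorial]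
  rw [div_eq_mul_one_div]
  have e : (fun m : ℕ => r ^ m * Real.Gamma ((m:ℝ) + n + 1) / m.factorial)
      = fun m : ℕ => (n.factorial : ℝ) * (((m + n).choose n : ℝ) * r ^ m) := by
    funext m
    rw [show ((m:ℝ) + n + 1) = ((m + n : ℕ) : ℝ) + 1 by push_cast; ring, Real.Gamma_nat_eq_factorial,
      ← Nat.add_choose_mul_factorial_mul_factorial m n]
    push_cast
    have : (m.factorial : ℝ) ≠ 0 := by positivity
    field_simp
  rw [e]
  exact h

lemma main_integral (a b t : ℝ) (n : ℕ) (ha : 0 ≤ a) (hn : (n:ℝ) = a + b) (ht : |t| < 1) :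
    ∫ y in Ioi (0:ℝ), besselIt a (t * y) * (1 / 2 * FF (-b) (y ^ 2 / 4)) * y ^ (2 * (n:ℝ) + 1)
      = 4 ^ n * (Real.Gamma ((n:ℝ) + 1) / (1 - t ^ 2) ^ (n + 1)) := by
  set F : ℕ → ℝ → ℝ := fun m y => ((t ^ 2 / 4) ^ m / (m.factorial * Real.Gamma (m + a + 1))) *
    (y ^ (2 * ((m:ℝ) + n + 1) - 1) * (1 / 2 * FF (-b) (y ^ 2 / 4))) with hF
  have hG : ∀ m : ℕ, 0 < Real.Gamma (m + a + 1) := fun m => Real.Gamma_pos_of_pos (by positivity)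
  have hM := fun m : ℕ => mellinK b ((m:ℝ) + n + 1) (by positivity)
    (by rw [hn]; have : (0:ℝ) ≤ m := by positivity
        linarith)
  have hval : ∀ m, ∫ y in Ioi (0:ℝ), F m y
      = 4 ^ n * ((t ^ 2) ^ m * Real.Gamma ((m:ℝ) + n + 1) / m.factorial) := by
    intro m
    simp only [hF]
    rw [integral_const_mul, (hM m).2, show (m:ℝ) + n + 1 - b = m + a + 1 by rw [hn]; ring,
      show (m:ℝ) + n + 1 - 1 = ((m + n : ℕ):ℝ) by push_cast; ring, Real.rpow_natCast, pow_add, div_pow]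
    have := (hG m).ne'
    field_simp
  have hsum := (sum_gamma n (t ^ 2) (by rw [abs_pow]; exact pow_lt_one₀ (abs_nonneg t) ht (by norm_num))).mul_left ((4:ℝ) ^ n)
  have key := hasSum_integral_of_summable_integral_norm (μ := volume.restrict (Ioi (0:ℝ))) (F := F)
    (fun m => (hM m).1.const_mul _) (by
      refine hsum.summable.congr fun m => ?_
      rw [← hval m]
      refine (setIntegral_congr_fun measurableSet_Ioi fun y hy => ?_).symm
      have hy : 0 < y := hy
      refine Real.norm_of_nonneg ?_
      have hFF : 0 ≤ FF (-b) (y ^ 2 / 4) := by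
        refine setIntegral_nonneg measurableSet_Ioi fun u hu => ?_
        have hu : 0 < u := hu
        positivity
      have := hG m
      simp only [hF]
      positivity)
  simp only [hval] at key
  rw [hsum.unique key]
  refine setIntegral_congr_fun measurableSet_Ioi fun y hy => ?_
  have hy : 0 < y := hy
  simp only [hF, besselIt]
  rw [mul_assoc, ← tsum_mul_right]
  refine tsum_congr fun m => ?_
  rw [show 2 * ((m:ℝ) + n + 1) - 1 = ((2 * m : ℕ) : ℝ) + (2 * (n:ℝ) + 1) by push_cast; ring,
    Real.rpow_add hy ((2 * m : ℕ) : ℝ), Real.rpow_natCast, pow_mul, pow_mul,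
    show (t * y / 2) ^ 2 = t ^ 2 / 4 * y ^ 2 by ring, mul_pow]
  ring

end
/-- The integral of the generating function:
`∫₀^∞ G^{μ,ν}(t,x) x^{μ+ν+1} dx = 2^{μ+ν} Γ((μ+ν+2)/2) (1+t)^{−(μ+ν+2)/2}` for `−1 < t < 1`. -/
theorem genFun_integral (μ ν : ℤ) (hcond : IntCond μ ν) (t : ℝ) (ht : t ∈ Set.Ioo (-1 : ℝ) 1) :
    ∫ x in Set.Ioi (0 : ℝ), genFun μ ν t x * x ^ ((μ : ℝ) + ν + 1)
      = (2 : ℝ) ^ ((μ : ℝ) + ν) * Real.Gamma (((μ : ℝ) + ν + 2) / 2)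
          * (1 + t) ^ (-((μ : ℝ) + ν + 2) / 2) := by
  obtain ⟨h1, h2, h3, h4⟩ := hcond
  have hμ : 0 ≤ μ := by
    obtain ⟨k, hk⟩ := h3
    by_contra hlt
    exact h4 ⟨by omega, by omega⟩
  have hex : ∃ n : ℕ, μ + ν = 2 * n := by
    obtain ⟨k, hk⟩ := h3
    have : 0 ≤ k + ν := by
      by_contra hlt
      omega
    exact ⟨(k + ν).toNat, by omega⟩
  obtain ⟨n, hn⟩ := hex
  have hn' : (μ:ℝ) + ν = 2 * n := by exact_mod_cast hn
  have ha : 0 < 1 - t := by linarith [ht.2]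
  have ha' : 0 < 1 + t := by linarith [ht.1]
  have habs : |t| < 1 := abs_lt.2 ⟨ht.1, ht.2⟩
  have hμ' : (0:ℝ) ≤ (μ:ℝ) / 2 := by
    have : (0:ℝ) ≤ μ := by exact_mod_cast hμ
    positivity
  have hmain := main_integral ((μ:ℝ) / 2) ((ν:ℝ) / 2) t n hμ' (by linarith) habs
  have hsub := integral_comp_mul_left_Ioi
    (fun x => genFun μ ν t x * x ^ ((μ : ℝ) + ν + 1)) 0 ha
  have hpt : ∫ y in Ioi (0:ℝ), genFun μ ν t ((1 - t) * y) * ((1 - t) * y) ^ ((μ : ℝ) + ν + 1)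
      = (1 - t) ^ n * ∫ y in Ioi (0:ℝ), besselIt ((μ:ℝ) / 2) (t * y)
        * (1 / 2 * FF (-((ν:ℝ) / 2)) (y ^ 2 / 4)) * y ^ (2 * (n:ℝ) + 1) := by
    rw [← integral_const_mul]
    refine setIntegral_congr_fun measurableSet_Ioi fun y hy => ?_
    have hy : 0 < y := hy
    simp only [genFun]
    rw [show t * ((1 - t) * y) / (1 - t) = t * y by field_simp,
      show (1 - t) * y / (1 - t) = y by field_simp, besselKt_eq ν h1 y hy, hn',
      Real.mul_rpow ha.le hy.le, show -(2 * (n:ℝ) + 2) / 2 = -((n:ℝ) + 1) by ring]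
    have e : (1 - t) ^ (-((n:ℝ) + 1)) * (1 - t) ^ (2 * (n:ℝ) + 1) = (1 - t) ^ n := by
      rw [← Real.rpow_add ha, ← Real.rpow_natCast]
      ring_nf
    rw [← e]
    ring
  rw [hpt, hmain, mul_zero, smul_eq_mul] at hsub
  rw [eq_inv_mul_iff_mul_eq₀ ha.ne'] at hsub
  rw [← hsub, hn', show (2 * (n:ℝ) + 2) / 2 = n + 1 by ring,
    show -(2 * (n:ℝ) + 2) / 2 = -((n + 1 : ℕ) : ℝ) by push_cast; ring, Real.rpow_neg ha'.le,
    Real.rpow_natCast, show (2 * (n:ℝ)) = ((2 * n : ℕ) : ℝ) by push_cast; ring, Real.rpow_natCast,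
    pow_mul, show (1 - t ^ 2) = (1 - t) * (1 + t) by ring, mul_pow]
  have e1 := ha.ne'
  have e2 := ha'.ne'
  norm_num
  field_simp
  ring
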